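/- Under the polynomial parametric setting and the Archimedean assumption, assume K_y is nonempty for every y ∈ Y and that for φ-almost all y ∈ Y the value J(y) is attained at a unique minimizer x*(y). Let h ∈ ℝ[x] with h(x) = Σ_{α∈ℕ^n} h_α x^α, and for each i ≥ i_0 let z^i be a nearly optimal feasible solution of the i-th semidefinite relaxation with L_{z^i}(f) ≤ ρ_i + 1/i. Then lim_{i→∞} Σ_{α∈ℕ^n} h_α z^i_{α0} = ∫_Y h(x*(y)) dφ(y). -/

import Mathlib

open MeasureTheory MvPolynomial Filter Topology Set

noncomputable section

/-- The Riesz-like linear functional `L_z` associated with a double-indexed real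
sequence `z = (z_{αβ})`, sending `Σ f_{αβ} x^α y^β` to `Σ f_{αβ} z_{αβ}`. -/
def Lz (n p : ℕ) (z : (Fin n → ℕ) → (Fin p → ℕ) → ℝ)
    (q : MvPolynomial (Fin n ⊕ Fin p) ℝ) : ℝ :=
  ∑ d ∈ q.support, q.coeff d * z (fun k => d (Sum.inl k)) (fun l => d (Sum.inr l))

/-- Every monomial `x^α y^β` of `q` satisfies `|α| ≤ i` and `|β| ≤ i`, i.e. `q` is in the
span of the monomial basis indexing the moment matrix `M_i`. -/
def DegOK (n p : ℕ) (i : ℕ) (q : MvPolynomial (Fin n ⊕ Fin p) ℝ) : Prop :=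
  ∀ d ∈ q.support, (∑ k, d (Sum.inl k)) ≤ i ∧ (∑ l, d (Sum.inr l)) ≤ i

/-- `⌈deg h / 2⌉`. -/
def halfDeg {σ : Type*} (h : MvPolynomial σ ℝ) : ℕ := (h.totalDegree + 1) / 2

/-- Feasibility of the sequence `z` for the `i`-th moment relaxation:
`M_i(z) ⪰ 0`, `M_{i-v_j}(h_j z) ⪰ 0` for all `j`, and `L_z(y^β) = γ_β` for `|β| ≤ 2i`.
Positive semidefiniteness of the moment (resp. localizing) matrix is expressed through
nonnegativity of the associated quadratic forms `c ↦ cᵀ M_i(z) c = L_z(q²)`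
(resp. `cᵀ M_{i-v_j}(h_j z) c = L_z(h_j q²)`), `q` ranging over the polynomials spanned
by the monomials indexing the matrix. -/
def RelaxFeasible (n p : ℕ) {ι : Type*} [Fintype ι]
    (H : ι → MvPolynomial (Fin n ⊕ Fin p) ℝ)
    (γ : (Fin p → ℕ) → ℝ) (i : ℕ)
    (z : (Fin n → ℕ) → (Fin p → ℕ) → ℝ) : Prop :=
  (∀ q, DegOK n p i q → 0 ≤ Lz n p z (q ^ 2)) ∧
  (∀ j, ∀ q, DegOK n p (i - halfDeg (H j)) q → 0 ≤ Lz n p z (H j * q ^ 2)) ∧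
  (∀ β : Fin p → ℕ, (∑ l, β l) ≤ 2 * i → z (fun _ => 0) β = γ β)

/-- Optimal value `ρ_i` of the `i`-th (primal) semidefinite relaxation. -/
def rhoSDP (n p : ℕ) {ι : Type*} [Fintype ι]
    (H : ι → MvPolynomial (Fin n ⊕ Fin p) ℝ)
    (γ : (Fin p → ℕ) → ℝ) (f : MvPolynomial (Fin n ⊕ Fin p) ℝ) (i : ℕ) : ℝ :=
  sInf {r | ∃ z, RelaxFeasible n p H γ i z ∧ r = Lz n p z f}

/-- Evaluation of a polynomial in `(x, y)` at a point of `ℝ^n × ℝ^p`. -/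
def evalXY (n p : ℕ) (q : MvPolynomial (Fin n ⊕ Fin p) ℝ)
    (w : (Fin n → ℝ) × (Fin p → ℝ)) : ℝ :=
  eval (Sum.elim w.1 w.2) q

/-- Optimal value `ρ` of the infinite-dimensional problem `P`: the infimum of `∫_K f dμ`
over finite Borel measures `μ` on `K` whose marginal on `ℝ^p` is `φ`. -/
def rhoP (n p : ℕ) (f : MvPolynomial (Fin n ⊕ Fin p) ℝ)
    (K : Set ((Fin n → ℝ) × (Fin p → ℝ))) (φ : Measure (Fin p → ℝ)) : ℝ :=
  sInf {r | ∃ μ : Measure ((Fin n → ℝ) × (Fin p → ℝ)),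
    IsFiniteMeasure μ ∧ μ Kᶜ = 0 ∧ μ.map Prod.snd = φ ∧
    r = ∫ w in K, evalXY n p f w ∂μ}

/-- `i₀ := max(⌈deg f / 2⌉, max_j ⌈deg h_j / 2⌉)`. -/
def iZero (n p : ℕ) {ι : Type*} [Fintype ι]
    (H : ι → MvPolynomial (Fin n ⊕ Fin p) ℝ)
    (f : MvPolynomial (Fin n ⊕ Fin p) ℝ) : ℕ :=
  max (halfDeg f) (Finset.univ.sup fun j => halfDeg (H j))

/-- The Archimedean (Putinar) assumption for the family `H`: for some `N`,
`N - ‖(x,y)‖²` lies in the quadratic module generated by the `H j`. -/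
def ArchimedeanQM (n p : ℕ) {ι : Type*} [Fintype ι]
    (H : ι → MvPolynomial (Fin n ⊕ Fin p) ℝ) : Prop :=
  ∃ (N : ℝ) (σ0 : MvPolynomial (Fin n ⊕ Fin p) ℝ)
    (σ : ι → MvPolynomial (Fin n ⊕ Fin p) ℝ),
    IsSumSq σ0 ∧ (∀ j, IsSumSq (σ j)) ∧
    C N - (∑ i : Fin n ⊕ Fin p, X i ^ 2) = σ0 + ∑ j, σ j * H j


/-! ### States of archimedean quadratic modules -/

structure IsQMod {A : Type*} [CommRing A] [Algebra ℝ A] (M : AddSubmonoid A) : Prop where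
  sq : ∀ a : A, a ^ 2 ∈ M
  mul : ∀ a : A, ∀ x ∈ M, a ^ 2 * x ∈ M
  arch : ∀ a : A, ∃ N : ℝ, 0 < N ∧ algebraMap ℝ A N - a ^ 2 ∈ M

lemma IsQMod.smul {A : Type*} [CommRing A] [Algebra ℝ A] {M : AddSubmonoid A} (hM : IsQMod M)
    {c : ℝ} (hc : 0 ≤ c) {x : A} (hx : x ∈ M) : algebraMap ℝ A c * x ∈ M := by
  have := hM.mul (algebraMap ℝ A (Real.sqrt c)) x hx
  rwa [← map_pow, Real.sq_sqrt hc] at this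

structure IsState {A : Type*} [CommRing A] [Algebra ℝ A] (M : AddSubmonoid A) (L : A → ℝ) :
    Prop where
  add : ∀ a b, L (a + b) = L a + L b
  smul : ∀ (c : ℝ) a, L (algebraMap ℝ A c * a) = c * L a
  one : L 1 = 1
  pos : ∀ x ∈ M, 0 ≤ L x

section
variable {A : Type*} [CommRing A] [Algebra ℝ A] {M : AddSubmonoid A} {L : A → ℝ}

lemma IsState.neg (h : IsState M L) (a : A) : L (-a) = - L a := by
  have := h.smul (-1) a
  simpa using this

lemma IsState.sub (h : IsState M L) (a b : A) : L (a - b) = L a - L b := by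
  rw [sub_eq_add_neg, h.add, h.neg]; ring

lemma IsState.const (h : IsState M L) (c : ℝ) : L (algebraMap ℝ A c) = c := by
  have := h.smul c 1
  simpa [h.one] using this

/-- Cauchy-Schwarz -/
lemma cs_aux (l : A → ℝ) (hadd : ∀ a b, l (a + b) = l a + l b)
    (hsmul : ∀ (c : ℝ) a, l (algebraMap ℝ A c * a) = c * l a)
    (hpos : ∀ a, 0 ≤ l (a ^ 2)) (a b : A) : l (a * b) ^ 2 ≤ l (a ^ 2) * l (b ^ 2) := by
  have key : ∀ t : ℝ, 0 ≤ l (b ^ 2) * (t * t) + (2 * l (a * b)) * t + l (a ^ 2) := by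
    intro t
    have h := hpos (algebraMap ℝ A t * b + a)
    have e : (algebraMap ℝ A t * b + a) ^ 2 =
        algebraMap ℝ A (t * t) * b ^ 2 + algebraMap ℝ A (2 * t) * (a * b) + a ^ 2 := by
      simp only [map_mul, map_ofNat]; ring
    rw [e, hadd, hadd, hsmul, hsmul] at h
    linarith
  have := discrim_le_zero key
  unfold discrim at this
  nlinarith

lemma IsState.cs (hM : IsQMod M) (h : IsState M L) (a b : A) :
    L (a * b) ^ 2 ≤ L (a ^ 2) * L (b ^ 2) :=
  cs_aux L h.add h.smul (fun a => h.pos _ (hM.sq a)) a b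

lemma IsState.pow_bound (hM : IsQMod M) (h : IsState M L) {a : A} {N : ℝ}
    (hN : 0 < N) (ha : algebraMap ℝ A N - a ^ 2 ∈ M) (k : ℕ) : L (a ^ (2 * k)) ≤ N ^ k := by
  induction k with
  | zero => simp [h.one]
  | succ k ih =>
    have := h.pos _ (hM.mul (a ^ k) _ ha)
    have e : (a ^ k) ^ 2 * (algebraMap ℝ A N - a ^ 2) =
      algebraMap ℝ A N * a ^ (2 * k) - a ^ (2 * (k + 1)) := by ring
    rw [e, h.sub, h.smul] at this
    calc _ ≤ N * L (a ^ (2 * k)) := by linarith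
      _ ≤ N * N ^ k := by gcongr
      _ = _ := by ring

lemma logconvex_bound (m : ℕ → ℝ) (hm : ∀ k, 0 ≤ m k)
    (hc : ∀ k, m (k + 1) ^ 2 ≤ m k * m (k + 2)) {N D : ℝ} (hN : 0 < N)
    (hb : ∀ k, m k ≤ D * N ^ k) : m 1 ≤ N * m 0 := by
  by_contra! hlt
  have h0 : 0 < m 0 := by
    rcases (hm 0).lt_or_eq with h | h
    · exact h
    · have := hc 0
      rw [← h] at this hlt
      simp at this hlt
      simp [this] at hlt
  have hr : N < m 1 / m 0 := by rwa [lt_div_iff₀ h0]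
  set r := m 1 / m 0 with hrd
  have hr0 : 0 < r := hN.trans hr
  have step : ∀ k, 0 < m k ∧ r * m k ≤ m (k + 1) := by
    intro k
    induction k with
    | zero => exact ⟨h0, by rw [hrd]; field_simp; simp⟩
    | succ k ih =>
      obtain ⟨h1, h2⟩ := ih
      have hp : 0 < m (k + 1) := lt_of_lt_of_le (by positivity) h2
      refine ⟨hp, ?_⟩
      have h3 := hc k
      have h4 : r * m k * m (k + 1) ≤ m k * m (k + 2) := by nlinarith
      have : m k * (r * m (k + 1)) ≤ m k * m (k + 2) := by linarith
      exact le_of_mul_le_mul_left this h1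
  have lower : ∀ k, m 0 * r ^ k ≤ m k := by
    intro k
    induction k with
    | zero => simp
    | succ k ih =>
      calc m 0 * r ^ (k + 1) = r * (m 0 * r ^ k) := by ring
        _ ≤ r * m k := by gcongr
        _ ≤ _ := (step k).2
  have hq : 1 < r / N := by rwa [one_lt_div hN]
  obtain ⟨k, hk⟩ := pow_unbounded_of_one_lt (D / m 0) hq
  have := (lower k).trans (hb k)
  rw [div_pow, lt_div_iff₀ (by positivity), div_mul_eq_mul_div, div_lt_iff₀ h0] at hk
  linarith

lemma IsState.mul_bound (hM : IsQMod M) (h : IsState M L) {a x : A} {N : ℝ}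
    (hN : 0 < N) (ha : algebraMap ℝ A N - a ^ 2 ∈ M) (hx : x ∈ M) :
    L (a ^ 2 * x) ≤ N * L x := by
  have hcs := cs_aux (fun b => L (b * x)) (fun a b => by rw [add_mul, h.add])
    (fun c a => by rw [mul_assoc, h.smul]) (fun a => h.pos _ (hM.mul a x hx))
  have := logconvex_bound (fun k => L (a ^ (2 * k) * x))
    (fun k => by
      have := h.pos _ (hM.mul (a ^ k) x hx)
      rwa [← pow_mul, mul_comm k 2] at this)
    (fun k => by
      have := hcs (a ^ k) (a ^ (k + 2))
      convert this using 3 <;> ring_nf) (N := N) (D := Real.sqrt (L (x ^ 2))) hN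
    (fun k => by
      have h1 := h.cs hM (a ^ (2 * k)) x
      have h2 := h.pow_bound hM hN ha (2 * k)
      have h3 : 0 ≤ L (x ^ 2) := h.pos _ (hM.sq x)
      apply le_of_sq_le_sq _ (by positivity)
      calc L (a ^ (2 * k) * x) ^ 2 ≤ L ((a ^ (2 * k)) ^ 2) * L (x ^ 2) := h1
        _ ≤ N ^ (2 * k) * L (x ^ 2) := by
          gcongr
          rwa [← pow_mul, mul_comm (2 * k) 2]
        _ = _ := by rw [mul_pow, Real.sq_sqrt h3]; ring)
  simpa using this

lemma isState_extreme_sq (hM : IsQMod M) (h : L ∈ extremePoints ℝ {L | IsState M L}) (a x : A) :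
    L (a ^ 2 * x) = L (a ^ 2) * L x := by
  rw [mem_extremePoints_iff_left] at h
  obtain ⟨hL, hext⟩ := h
  have hL : IsState M L := hL
  have hnn : 0 ≤ L (a ^ 2) := hL.pos _ (hM.sq a)
  rcases hnn.eq_or_lt with h0 | hpos
  · have := hL.cs hM a (a * x)
    rw [← h0, zero_mul] at this
    have h1 : L (a * (a * x)) = 0 := by nlinarith [sq_nonneg (L (a * (a * x)))]
    rw [← h0, zero_mul, ← h1]; congr 1; ring
  · obtain ⟨N0, hN0, ha0⟩ := hM.arch a
    set N := N0 + 1 with hNdef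
    have hN : 0 < N := by positivity
    have ha : algebraMap ℝ A N - a ^ 2 ∈ M := by
      have h1 : (1 : A) ∈ M := by simpa using hM.sq 1
      have := M.add_mem ha0 h1
      convert this using 1
      simp [hNdef]; ring
    have hlt : L (a ^ 2) < N := by
      have := hL.pos _ ha0
      rw [hL.sub, hL.const] at this
      linarith
    set c := L (a ^ 2)
    have hd : 0 < N - c := by linarith
    have s1 : IsState M (fun x => L (a ^ 2 * x) / c) := by
      refine ⟨fun u v => ?_, fun r u => ?_, ?_, fun u hu => ?_⟩
      · rw [mul_add, hL.add]; ring
      · rw [mul_left_comm, hL.smul]; ring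
      · simp only [mul_one]; exact div_self hpos.ne'
      · exact div_nonneg (hL.pos _ (hM.mul a u hu)) hpos.le
    have s2 : IsState M (fun x => (N * L x - L (a ^ 2 * x)) / (N - c)) := by
      refine ⟨fun u v => ?_, fun r u => ?_, ?_, fun u hu => ?_⟩
      · rw [mul_add, hL.add, hL.add]; ring
      · rw [mul_left_comm, hL.smul, hL.smul]; ring
      · simp only [mul_one, hL.one]; exact div_self hd.ne'
      · exact div_nonneg (sub_nonneg.2 (hL.mul_bound hM hN ha hu)) hd.le
    have := hext _ s1 _ s2 ⟨c / N, (N - c) / N, by positivity, by positivity, by field_simp; ring, by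
      funext u
      simp only [Pi.add_apply, Pi.smul_apply, smul_eq_mul]
      field_simp
      ring⟩
    have := congrFun this x
    rw [div_eq_iff hpos.ne'] at this
    rw [this]; ring

lemma isState_extreme_mul (hM : IsQMod M) (h : L ∈ extremePoints ℝ {L | IsState M L}) (a x : A) :
    L (a * x) = L a * L x := by
  have hL : IsState M L := h.1
  have h1 := isState_extreme_sq hM h (a + 1) x
  have h2 := isState_extreme_sq hM h (a - 1) x
  have e1 : (a + 1) ^ 2 = (a - 1) ^ 2 + algebraMap ℝ A 4 * a := by
    simp only [map_ofNat]; ring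
  rw [e1, add_mul, hL.add, hL.add, mul_assoc, hL.smul, hL.smul, h2] at h1
  linarith

lemma isState_convex : Convex ℝ {L : A → ℝ | IsState M L} := by
  intro L hL L' hL' s t hs ht hst
  have hL : IsState M L := hL
  have hL' : IsState M L' := hL'
  refine ⟨fun u v => ?_, fun r u => ?_, ?_, fun u hu => ?_⟩ <;>
    simp only [Pi.add_apply, Pi.smul_apply, smul_eq_mul]
  · rw [hL.add, hL'.add]; ring
  · rw [hL.smul, hL'.smul]; ring
  · rw [hL.one, hL'.one]; linarith
  · have := hL.pos u hu
    have := hL'.pos u hu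
    positivity

lemma IsState.bound (hM : IsQMod M) (a : A) : ∃ N : ℝ, ∀ L, IsState M L → |L a| ≤ N := by
  obtain ⟨N, hN, ha⟩ := hM.arch a
  refine ⟨N + 1, fun L hL => ?_⟩
  have h1 := hL.pos _ ha
  rw [hL.sub, hL.const] at h1
  have h2 := hL.cs hM a 1
  rw [mul_one, one_pow, hL.one, mul_one] at h2
  rw [abs_le]
  constructor <;> nlinarith

lemma isState_compact (hM : IsQMod M) : IsCompact {L : A → ℝ | IsState M L} := by
  choose N hN using fun a => IsState.bound hM a
  have hcl : IsClosed {L : A → ℝ | IsState M L} := by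
    have : {L : A → ℝ | IsState M L} =
        (⋂ a, ⋂ b, {L | L (a + b) = L a + L b}) ∩
        ((⋂ c : ℝ, ⋂ a, {L | L (algebraMap ℝ A c * a) = c * L a}) ∩
        ({L | L 1 = 1} ∩ (⋂ x ∈ M, {L | 0 ≤ L x}))) := by
      ext L
      simp only [mem_ofPred_eq, mem_inter_iff, mem_iInter]
      exact ⟨fun h => ⟨h.1, h.2, h.3, h.4⟩, fun h => ⟨h.1, h.2.1, h.2.2.1, h.2.2.2⟩⟩
    rw [this]
    refine IsClosed.inter ?_ (IsClosed.inter ?_ (IsClosed.inter ?_ ?_))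
    · exact isClosed_iInter fun a => isClosed_iInter fun b =>
        isClosed_eq (by fun_prop) (by fun_prop)
    · exact isClosed_iInter fun a => isClosed_iInter fun b =>
        isClosed_eq (by fun_prop) (by fun_prop)
    · exact isClosed_eq (by fun_prop) (by fun_prop)
    · exact isClosed_iInter fun a => isClosed_iInter fun _ =>
        isClosed_le (by fun_prop) (by fun_prop)
  refine IsCompact.of_isClosed_subset (isCompact_univ_pi fun a => isCompact_Icc (a := -N a) (b := N a))
    hcl ?_
  intro L hL a _
  exact abs_le.1 (hN a L hL)

end

/-! ### The quadratic module of a family of polynomials -/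

def QM {σ ι : Type*} (H : ι → MvPolynomial σ ℝ) : AddSubmonoid (MvPolynomial σ ℝ) :=
  AddSubmonoid.closure ({q | ∃ a, q = a ^ 2} ∪ {q | ∃ j a, q = H j * a ^ 2})

section
variable {σ ι : Type*} {H : ι → MvPolynomial σ ℝ}

lemma QM_sq (a : MvPolynomial σ ℝ) : a ^ 2 ∈ QM H :=
  AddSubmonoid.subset_closure (Or.inl ⟨a, rfl⟩)

lemma QM_gen (j : ι) (a : MvPolynomial σ ℝ) : H j * a ^ 2 ∈ QM H :=
  AddSubmonoid.subset_closure (Or.inr ⟨j, a, rfl⟩)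

lemma QM_mul (a x : MvPolynomial σ ℝ) (hx : x ∈ QM H) : a ^ 2 * x ∈ QM H := by
  unfold QM at hx
  induction hx using AddSubmonoid.closure_induction with
  | mem x hx =>
    rcases hx with ⟨b, rfl⟩ | ⟨j, b, rfl⟩
    · rw [← mul_pow]; exact QM_sq _
    · have : a ^ 2 * (H j * b ^ 2) = H j * (a * b) ^ 2 := by ring
      rw [this]; exact QM_gen _ _
  | zero => simp
  | add x y _ _ hx hy => rw [mul_add]; exact add_mem hx hy

lemma QM_sumSq {s : MvPolynomial σ ℝ} (hs : IsSumSq s) : s ∈ QM H := by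
  induction hs with
  | zero => exact zero_mem _
  | sq_add a _ ih => rw [← sq]; exact add_mem (QM_sq _) ih

lemma QM_sumSq_mul {s : MvPolynomial σ ℝ} (hs : IsSumSq s) (j : ι) : s * H j ∈ QM H := by
  induction hs with
  | zero => simp
  | sq_add a _ ih =>
    rw [← sq, add_mul, mul_comm]; exact add_mem (QM_gen _ _) ih

lemma QM_const_mul {c : ℝ} (hc : 0 ≤ c) {x : MvPolynomial σ ℝ} (hx : x ∈ QM H) :
    C c * x ∈ QM H := by
  have := QM_mul (C (Real.sqrt c)) x hx
  rwa [← map_pow, Real.sq_sqrt hc] at this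

lemma QM_const {c : ℝ} (hc : 0 ≤ c) : (C c : MvPolynomial σ ℝ) ∈ QM H := by
  have := QM_sq (H := H) (C (Real.sqrt c))
  rwa [← map_pow, Real.sq_sqrt hc] at this

lemma QM_arch [Fintype σ] {N : ℝ} (hN : C N - (∑ i : σ, X i ^ 2) ∈ QM H) (a : MvPolynomial σ ℝ) :
    ∃ N : ℝ, 0 < N ∧ C N - a ^ 2 ∈ QM H := by
  classical
  induction a using MvPolynomial.induction_on with
  | C c =>
    refine ⟨c ^ 2 + 1, by positivity, ?_⟩
    have : (C (c ^ 2 + 1) - C c ^ 2 : MvPolynomial σ ℝ) = C 1 := by simp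
    rw [this]; exact QM_const (by norm_num)
  | add a b ha hb =>
    obtain ⟨A, hA, ha⟩ := ha
    obtain ⟨B, hB, hb⟩ := hb
    refine ⟨2 * A + 2 * B, by positivity, ?_⟩
    have : C (2 * A + 2 * B) - (a + b) ^ 2 =
      ((C A - a ^ 2) + (C A - a ^ 2)) + ((C B - b ^ 2) + (C B - b ^ 2)) + (a - b) ^ 2 := by
      simp only [map_add, map_mul, map_ofNat]; ring
    rw [this]
    exact add_mem (add_mem (add_mem ha ha) (add_mem hb hb)) (QM_sq _)
  | mul_X a i ha =>
    obtain ⟨A, hA, ha⟩ := ha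
    have hX : C (max N 1) - (X i : MvPolynomial σ ℝ) ^ 2 ∈ QM H := by
      have : C (max N 1) - (X i : MvPolynomial σ ℝ) ^ 2 =
        (C N - (∑ i : σ, X i ^ 2)) + C (max N 1 - N) + ∑ j ∈ Finset.univ.erase i, X j ^ 2 := by
        rw [← Finset.add_sum_erase _ _ (Finset.mem_univ i), map_sub]; ring
      rw [this]
      exact add_mem (add_mem hN (QM_const (by simp))) (sum_mem fun j _ => QM_sq _)
    refine ⟨A * max N 1, by positivity, ?_⟩
    have : C (A * max N 1) - (a * X i) ^ 2 = (X i) ^ 2 * (C A - a ^ 2) +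
        C A * (C (max N 1) - (X i : MvPolynomial σ ℝ) ^ 2) := by
      rw [map_mul]; ring
    rw [this]
    exact add_mem (QM_mul _ _ ha) (QM_const_mul hA.le hX)

lemma QM_isQMod [Fintype σ] {N : ℝ} (hN : C N - (∑ i : σ, X i ^ 2) ∈ QM H) : IsQMod (QM H) :=
  ⟨QM_sq, fun a x hx => QM_mul a x hx, fun a => QM_arch hN a⟩

/-- Two-sided archimedean bound. -/
lemma IsQMod.two_sided {A : Type*} [CommRing A] [Algebra ℝ A] {M : AddSubmonoid A}
    (hM : IsQMod M) (a : A) :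
    ∃ N : ℝ, algebraMap ℝ A N - a ∈ M ∧ algebraMap ℝ A N + a ∈ M := by
  obtain ⟨N, hN, ha⟩ := hM.arch a
  have h2 : (2 : A) * algebraMap ℝ A (1 / 2) = 1 := by
    rw [← map_ofNat (algebraMap ℝ A) 2, ← map_mul]; norm_num
  refine ⟨N + (1 / 2) ^ 2, ?_, ?_⟩
  · have := add_mem ha (hM.sq (a - algebraMap ℝ A (1 / 2)))
    convert this using 1
    rw [map_add, map_pow]; linear_combination a * h2
  · have := add_mem ha (hM.sq (a + algebraMap ℝ A (1 / 2)))
    convert this using 1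
    rw [map_add, map_pow]; linear_combination (-a) * h2

lemma state_repr [Fintype σ] {N : ℝ} (hN : C N - (∑ i : σ, X i ^ 2) ∈ QM H)
    {T : Type*} [TopologicalSpace T] [CompactSpace T] [T2Space T] [MeasurableSpace T] [BorelSpace T]
    (g : T → σ → ℝ) (hg : Continuous g)
    (hT : ∀ v : σ → ℝ, (∀ j, 0 ≤ eval v (H j)) → v ∈ range g)
    {L : MvPolynomial σ ℝ → ℝ} (hL : IsState (QM H) L) :
    ∃ μ : ProbabilityMeasure T, ∀ q, L q = ∫ t, eval (g t) q ∂(μ : Measure T) := by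
  have hM := QM_isQMod hN
  have hev : ∀ q : MvPolynomial σ ℝ, Continuous fun t => eval (g t) q := fun q =>
    (MvPolynomial.continuous_eval q).comp hg
  have hint : ∀ (μ : Measure T) [IsFiniteMeasure μ] (q : MvPolynomial σ ℝ),
      Integrable (fun t => eval (g t) q) μ := by
    intro μ _ q
    exact (BoundedContinuousFunction.mkOfCompact ⟨_, hev q⟩).integrable μ
  let Φ : ProbabilityMeasure T → (MvPolynomial σ ℝ → ℝ) :=
    fun μ q => ∫ t, eval (g t) q ∂(μ : Measure T)
  have hΦ : Continuous Φ := by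
    refine continuous_pi fun q => ?_
    rw [continuous_iff_continuousAt]
    intro μ
    exact ((ProbabilityMeasure.tendsto_iff_forall_integral_tendsto).1 tendsto_id
      (BoundedContinuousFunction.mkOfCompact ⟨_, hev q⟩))
  have hcl : IsClosed (range Φ) := (isCompact_range hΦ).isClosed
  have hcv : Convex ℝ (range Φ) := by
    rintro _ ⟨μ, rfl⟩ _ ⟨ν, rfl⟩ a b ha hb hab
    let ρ : Measure T := ENNReal.ofReal a • (μ : Measure T) + ENNReal.ofReal b • (ν : Measure T)
    have hρ : IsProbabilityMeasure ρ := ⟨by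
      simp only [ρ, Measure.add_apply, Measure.smul_apply, measure_univ, smul_eq_mul, mul_one]
      rw [← ENNReal.ofReal_add ha hb, hab, ENNReal.ofReal_one]⟩
    refine ⟨⟨ρ, hρ⟩, ?_⟩
    funext q
    change ∫ t, eval (g t) q ∂ρ = _
    rw [integral_add_measure ((hint _ q).smul_measure ENNReal.ofReal_ne_top)
      ((hint _ q).smul_measure ENNReal.ofReal_ne_top), integral_smul_measure,
      integral_smul_measure, ENNReal.toReal_ofReal ha, ENNReal.toReal_ofReal hb]
    rfl
  have hex : extremePoints ℝ {L | IsState (QM H) L} ⊆ range Φ := by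
    intro l hl
    have hS : IsState (QM H) l := hl.1
    have hmul := isState_extreme_mul hM hl
    let v : σ → ℝ := fun i => l (X i)
    have hv : ∀ q, l q = eval v q := by
      intro q
      induction q using MvPolynomial.induction_on with
      | C c => rw [eval_C]; exact hS.const c
      | add a b ha hb => rw [hS.add, ha, hb, map_add]
      | mul_X a i ha => rw [hmul, ha, map_mul, eval_X]
    obtain ⟨t, ht⟩ := hT v fun j => by
      rw [← hv]
      have := hS.pos _ (QM_gen j 1)
      simpa using this
    refine ⟨⟨Measure.dirac t, inferInstance⟩, ?_⟩
    funext q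
    change ∫ t, eval (g t) q ∂(Measure.dirac t) = _
    rw [integral_dirac' _ _ (hev q).stronglyMeasurable, ht, hv]
  have : L ∈ closure (convexHull ℝ (extremePoints ℝ {L | IsState (QM H) L})) := by
    rw [closure_convexHull_extremePoints (isState_compact hM) isState_convex]
    exact hL
  obtain ⟨μ, hμ⟩ := closure_minimal (convexHull_min hex hcv) hcl this
  exact ⟨μ, fun q => by rw [← hμ]⟩

end

open BoundedContinuousFunction in
lemma measure_ext_of_poly {σ : Type*} [Fintype σ] {Y : Set (σ → ℝ)} (hY : IsCompact Y)
    (P P' : Measure (σ → ℝ)) [IsFiniteMeasure P] [IsFiniteMeasure P']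
    (hP : P Yᶜ = 0) (hP' : P' Yᶜ = 0)
    (h : ∀ q : MvPolynomial σ ℝ, ∫ y, eval y q ∂P = ∫ y, eval y q ∂P') : P = P' := by
  have hme : MeasurableEmbedding (Subtype.val : Y → σ → ℝ) :=
    MeasurableEmbedding.subtype_coe hY.measurableSet
  have : CompactSpace Y := isCompact_iff_compactSpace.1 hY
  have back : ∀ (Q : Measure (σ → ℝ)), Q Yᶜ = 0 → (Q.comap (Subtype.val : Y → σ → ℝ)).map
      Subtype.val = Q := by
    intro Q hQ
    rw [hme.map_comap, Subtype.range_coe]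
    exact Measure.restrict_eq_self_of_ae_mem hQ
  have fin : ∀ (Q : Measure (σ → ℝ)) [IsFiniteMeasure Q],
      IsFiniteMeasure (Q.comap (Subtype.val : Y → σ → ℝ)) := by
    intro Q _
    exact ⟨by rw [hme.comap_apply]; exact measure_lt_top _ _⟩
  have := fin P
  have := fin P'
  let A : StarSubalgebra ℝ (Y →ᵇ ℝ) :=
    { carrier := {g | ∃ q : MvPolynomial σ ℝ, ∀ y, g y = eval (y : σ → ℝ) q}
      mul_mem' := by
        rintro a b ⟨q, hq⟩ ⟨r, hr⟩
        exact ⟨q * r, fun y => by simp [hq, hr]⟩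
      add_mem' := by
        rintro a b ⟨q, hq⟩ ⟨r, hr⟩
        exact ⟨q + r, fun y => by simp [hq, hr]⟩
      algebraMap_mem' := fun r => ⟨C r, fun y => by simp [Algebra.algebraMap_eq_smul_one]⟩
      star_mem' := by
        rintro a ⟨q, hq⟩
        exact ⟨q, fun y => by simp [hq]⟩ }
  have key : P.comap (Subtype.val : Y → σ → ℝ) = P'.comap (Subtype.val : Y → σ → ℝ) := by
    have : CompleteSpace Y := hY.isComplete.completeSpace_coe
    refine ext_of_forall_mem_subalgebra_integral_eq_of_pseudoEMetric_complete_countable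
      (𝕜 := ℝ) (A := A) ?_ ?_
    · intro x y hxy
      obtain ⟨i, hi⟩ : ∃ i, (x : σ → ℝ) i ≠ (y : σ → ℝ) i := by
        by_contra! hc
        exact hxy (Subtype.ext (funext hc))
      let gi : Y →ᵇ ℝ := mkOfCompact ⟨fun y : Y => (y : σ → ℝ) i,
        (continuous_apply i).comp continuous_subtype_val⟩
      refine ⟨fun y => gi y, ⟨toContinuousMapStarₐ ℝ gi, ⟨gi, ⟨X i, fun y => ?_⟩, rfl⟩, rfl⟩, hi⟩
      simp [gi]
    · rintro g ⟨q, hq⟩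
      simp only [hq]
      have e : ∀ (Q : Measure (σ → ℝ)), Q Yᶜ = 0 →
          ∫ y : Y, eval (y : σ → ℝ) q ∂(Q.comap (Subtype.val : Y → σ → ℝ)) = ∫ y, eval y q ∂Q := by
        intro Q hQ
        conv_rhs => rw [← back Q hQ]
        rw [hme.integral_map]
      rw [e P hP, e P' hP', h]
  rw [← back P hP, ← back P' hP', key]

/-! ### The functional `L_z` -/

section
variable {n p : ℕ}

lemma Lz_eq_of_subset (z : (Fin n → ℕ) → (Fin p → ℕ) → ℝ) (q : MvPolynomial (Fin n ⊕ Fin p) ℝ)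
    {s : Finset ((Fin n ⊕ Fin p) →₀ ℕ)} (hs : q.support ⊆ s) :
    Lz n p z q =
      ∑ d ∈ s, q.coeff d * z (fun k => d (Sum.inl k)) (fun l => d (Sum.inr l)) := by
  unfold Lz
  refine Finset.sum_subset hs fun d _ hd => ?_
  rw [notMem_support_iff.1 hd, zero_mul]

lemma Lz_add (z : (Fin n → ℕ) → (Fin p → ℕ) → ℝ) (q r : MvPolynomial (Fin n ⊕ Fin p) ℝ) :
    Lz n p z (q + r) = Lz n p z q + Lz n p z r := by
  classical
  rw [Lz_eq_of_subset z (q + r) (s := q.support ∪ r.support) support_add,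
    Lz_eq_of_subset z q (s := q.support ∪ r.support) Finset.subset_union_left,
    Lz_eq_of_subset z r (s := q.support ∪ r.support) Finset.subset_union_right,
    ← Finset.sum_add_distrib]
  refine Finset.sum_congr rfl fun d _ => ?_
  rw [coeff_add]; ring

lemma Lz_smul (z : (Fin n → ℕ) → (Fin p → ℕ) → ℝ) (c : ℝ)
    (q : MvPolynomial (Fin n ⊕ Fin p) ℝ) :
    Lz n p z (C c * q) = c * Lz n p z q := by
  classical
  have hs : (C c * q).support ⊆ q.support := by
    intro d hd
    rw [mem_support_iff, coeff_C_mul] at hd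
    rw [mem_support_iff]
    exact right_ne_zero_of_mul hd
  rw [Lz_eq_of_subset z _ hs, Lz, Finset.mul_sum]
  refine Finset.sum_congr rfl fun d _ => ?_
  rw [coeff_C_mul]; ring

lemma Lz_neg (z : (Fin n → ℕ) → (Fin p → ℕ) → ℝ) (q : MvPolynomial (Fin n ⊕ Fin p) ℝ) :
    Lz n p z (-q) = - Lz n p z q := by
  have := Lz_smul z (-1) q
  simpa using this

lemma Lz_monomial (z : (Fin n → ℕ) → (Fin p → ℕ) → ℝ) (d : (Fin n ⊕ Fin p) →₀ ℕ) (c : ℝ) :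
    Lz n p z (monomial d c) = c * z (fun k => d (Sum.inl k)) (fun l => d (Sum.inr l)) := by
  classical
  rw [Lz_eq_of_subset z _ (s := {d}) support_monomial_subset]
  simp

lemma Lz_C (z : (Fin n → ℕ) → (Fin p → ℕ) → ℝ) (c : ℝ) :
    Lz n p z (C c) = c * z (fun _ => 0) (fun _ => 0) := by
  have := Lz_monomial z 0 c
  simpa using this

lemma degOK_of_le (q : MvPolynomial (Fin n ⊕ Fin p) ℝ) {i : ℕ} (hi : q.totalDegree ≤ i) :
    DegOK n p i q := by
  intro d hd
  have h1 := (le_totalDegree hd).trans hi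
  rw [Finsupp.sum_fintype _ _ (fun _ => rfl), Fintype.sum_sum_type] at h1
  constructor <;> omega

lemma QM_Lz_nonneg {ι : Type*} [Fintype ι] (H : ι → MvPolynomial (Fin n ⊕ Fin p) ℝ)
    (γ : (Fin p → ℕ) → ℝ) {q : MvPolynomial (Fin n ⊕ Fin p) ℝ} (hq : q ∈ QM H) :
    ∃ i1 : ℕ, ∀ i ≥ i1, ∀ z, RelaxFeasible n p H γ i z → 0 ≤ Lz n p z q := by
  unfold QM at hq
  induction hq using AddSubmonoid.closure_induction with
  | mem x hx =>
    rcases hx with ⟨b, rfl⟩ | ⟨j, b, rfl⟩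
    · exact ⟨b.totalDegree, fun i hi z hz => hz.1 b (degOK_of_le b hi)⟩
    · exact ⟨b.totalDegree + halfDeg (H j), fun i hi z hz =>
        hz.2.1 j b (degOK_of_le b (by omega))⟩
  | zero => exact ⟨0, fun i _ z _ => by simp [Lz]⟩
  | add x y _ _ hx hy =>
    obtain ⟨i, hi⟩ := hx
    obtain ⟨j, hj⟩ := hy
    refine ⟨max i j, fun k hk z hz => ?_⟩
    rw [Lz_add]
    exact add_nonneg (hi k (le_of_max_le_left hk) z hz) (hj k (le_of_max_le_right hk) z hz)

lemma evalXY_continuous (q : MvPolynomial (Fin n ⊕ Fin p) ℝ) : Continuous (evalXY n p q) := by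
  unfold evalXY
  refine (MvPolynomial.continuous_eval q).comp (continuous_pi fun i => ?_)
  rcases i with i | i <;> simp only [Sum.elim_inl, Sum.elim_inr] <;> fun_prop

lemma evalXY_integrable {Ω : Type*} [MeasurableSpace Ω] {ν : Measure Ω} [IsFiniteMeasure ν]
    {K : Set ((Fin n → ℝ) × (Fin p → ℝ))} (hK : IsCompact K)
    {u : Ω → (Fin n → ℝ) × (Fin p → ℝ)} (hu : AEMeasurable u ν) (huK : ∀ᵐ ω ∂ν, u ω ∈ K)
    (q : MvPolynomial (Fin n ⊕ Fin p) ℝ) : Integrable (fun ω => evalXY n p q (u ω)) ν := by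
  obtain ⟨B, hB⟩ := hK.exists_bound_of_continuousOn (evalXY_continuous q).continuousOn
  refine Integrable.of_bound (C := B) ?_ ?_
  · exact ((evalXY_continuous q).measurable.comp_aemeasurable hu).aestronglyMeasurable
  · filter_upwards [huK] with ω hω using hB _ hω

def momSeq {Ω : Type*} [MeasurableSpace Ω] (ν : Measure Ω)
    (u : Ω → (Fin n → ℝ) × (Fin p → ℝ)) : (Fin n → ℕ) → (Fin p → ℕ) → ℝ :=
  fun α β => ∫ ω, (∏ k, (u ω).1 k ^ α k) * (∏ l, (u ω).2 l ^ β l) ∂ν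

lemma Lz_momSeq {Ω : Type*} [MeasurableSpace Ω] {ν : Measure Ω} [IsFiniteMeasure ν]
    {K : Set ((Fin n → ℝ) × (Fin p → ℝ))} (hK : IsCompact K)
    {u : Ω → (Fin n → ℝ) × (Fin p → ℝ)} (hu : AEMeasurable u ν) (huK : ∀ᵐ ω ∂ν, u ω ∈ K)
    (q : MvPolynomial (Fin n ⊕ Fin p) ℝ) :
    Lz n p (momSeq ν u) q = ∫ ω, evalXY n p q (u ω) ∂ν := by
  induction q using MvPolynomial.induction_on' with
  | monomial d c =>
    rw [Lz_monomial, momSeq, ← integral_const_mul]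
    refine integral_congr_ae (Eventually.of_forall fun ω => ?_)
    simp [evalXY, eval_monomial, Finsupp.prod_fintype, Fintype.prod_sum_type]
  | add a b ha hb =>
    rw [Lz_add, ha, hb, ← integral_add (evalXY_integrable hK hu huK a)
      (evalXY_integrable hK hu huK b)]
    simp [evalXY]

lemma argmin_aemeasurable {K : Set ((Fin n → ℝ) × (Fin p → ℝ))} (hK : IsCompact K)
    {F : (Fin n → ℝ) × (Fin p → ℝ) → ℝ} (hF : Continuous F) {φ : Measure (Fin p → ℝ)}
    {xs : (Fin p → ℝ) → (Fin n → ℝ)}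
    (h : ∀ᵐ y ∂φ, (xs y, y) ∈ K ∧ ∀ x, (x, y) ∈ K → F (x, y) ≤ F (xs y, y) → x = xs y) :
    AEMeasurable xs φ := by
  classical
  obtain ⟨t, hsub, htm, ht0⟩ := exists_measurable_superset_of_null h
  let xs' : (Fin p → ℝ) → (Fin n → ℝ) := fun y => if y ∈ tᶜ then xs y else 0
  have hgood : ∀ y ∈ tᶜ, (xs y, y) ∈ K ∧ ∀ x, (x, y) ∈ K → F (x, y) ≤ F (xs y, y) → x = xs y := by
    intro y hy
    by_contra hc
    exact hy (hsub hc)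
  let B : Set (Fin n → ℝ) → ℚ → Set (Fin p → ℝ) :=
    fun D r => Prod.snd '' (K ∩ (F ⁻¹' Iic (r : ℝ) ∩ Prod.fst ⁻¹' D))
  have hB : ∀ D, IsClosed D → ∀ r, MeasurableSet (B D r) := by
    intro D hD r
    refine IsCompact.measurableSet (IsCompact.image (hK.inter_right ?_) continuous_snd)
    exact (isClosed_Iic.preimage hF).inter (hD.preimage continuous_fst)
  have key : ∀ D, IsClosed D → ∀ y ∈ tᶜ, (xs y ∈ D ↔ ∀ r : ℚ, y ∈ B univ r → y ∈ B D r) := by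
    intro D hD y hy
    obtain ⟨hyK, huniq⟩ := hgood y hy
    constructor
    · rintro hxD r ⟨⟨x, y'⟩, ⟨hk, hr, -⟩, rfl⟩
      simp only [mem_preimage, mem_Iic] at hr
      refine ⟨(xs y', y'), ⟨hyK, ?_, hxD⟩, rfl⟩
      simp only [mem_preimage, mem_Iic]
      by_contra! hlt
      have hxx : x = xs y' := huniq x hk (hr.trans hlt.le)
      rw [← hxx] at hlt
      exact absurd hr (not_le.2 hlt)
    · intro hr
      have hb : ∀ r : ℚ, F (xs y, y) ≤ r → ∃ x ∈ D, (x, y) ∈ K ∧ F (x, y) ≤ r := by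
        intro r hle
        obtain ⟨⟨x, y'⟩, ⟨hk, hr', hxD⟩, rfl⟩ := hr r ⟨(xs y, y), ⟨hyK, hle, trivial⟩, rfl⟩
        exact ⟨x, hxD, hk, hr'⟩
      have hc : IsCompact (K ∩ (Prod.fst ⁻¹' D ∩ Prod.snd ⁻¹' {y})) :=
        hK.inter_right ((hD.preimage continuous_fst).inter
          (isClosed_singleton.preimage continuous_snd))
      obtain ⟨r0, hr0⟩ := exists_rat_gt (F (xs y, y))
      obtain ⟨x0, hx0, hx0K, -⟩ := hb r0 hr0.le
      obtain ⟨⟨x1, y1⟩, ⟨hwK, hwD, hwy⟩, hmin⟩ :=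
        hc.exists_isMinOn ⟨(x0, y), hx0K, hx0, rfl⟩ hF.continuousOn
      have hwy : y1 = y := hwy
      subst hwy
      have hle : F (x1, y1) ≤ F (xs y1, y1) := by
        by_contra! hlt
        obtain ⟨r, hr1, hr2⟩ := exists_rat_btwn hlt
        obtain ⟨x, hxD, hxK, hxr⟩ := hb r hr1.le
        have := hmin (show (x, y1) ∈ _ from ⟨hxK, hxD, rfl⟩)
        simp only [mem_ofPred_eq] at this
        linarith
      rw [← huniq x1 hwK hle]
      exact hwD
  refine ⟨xs', measurable_of_isClosed fun D hD => ?_, ?_⟩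
  · have : xs' ⁻¹' D = (tᶜ ∩ ⋂ r : ℚ, ((B univ r)ᶜ ∪ B D r)) ∪ (t ∩ {_y | (0 : Fin n → ℝ) ∈ D}) := by
      ext y
      by_cases hy : y ∈ t
      · simp [xs', hy]
      · have := key D hD y hy
        simp [xs', hy, this, imp_iff_not_or]
    rw [this]
    refine (htm.compl.inter (MeasurableSet.iInter fun r => ?_)).union
      (htm.inter (MeasurableSet.const _))
    exact (hB _ isClosed_univ r).compl.union (hB _ hD r)
  · have : ∀ᵐ y ∂φ, y ∈ tᶜ := by
      rw [ae_iff]; simpa using ht0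
    filter_upwards [this] with y hy
    simp only [xs', if_pos hy]

end

set_option maxHeartbeats 400000 in
/-- approximation of polynomial functionals of the optimal solutions,
`Σ_α h_α z^i_{α0} → ∫_Y h(x*(y)) dφ`. -/
theorem stmt15 (n p m s : ℕ)
    (f : MvPolynomial (Fin n ⊕ Fin p) ℝ)
    (hx : Fin m → MvPolynomial (Fin n ⊕ Fin p) ℝ)
    (hy : Fin s → MvPolynomial (Fin p) ℝ)
    (H : Fin m ⊕ Fin s → MvPolynomial (Fin n ⊕ Fin p) ℝ)
    (hH : H = Sum.elim hx (fun k => rename Sum.inr (hy k)))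
    (Y : Set (Fin p → ℝ)) (hYdef : Y = {y | ∀ k, 0 ≤ eval y (hy k)}) (hYc : IsCompact Y)
    (K : Set ((Fin n → ℝ) × (Fin p → ℝ)))
    (hKdef : K = {w | w.2 ∈ Y ∧ ∀ j, 0 ≤ evalXY n p (hx j) w}) (hKc : IsCompact K)
    (Ky : (Fin p → ℝ) → Set (Fin n → ℝ))
    (hKy : ∀ y, Ky y = {x | ∀ j, 0 ≤ eval (Sum.elim x y) (hx j)})
    (hne : ∀ y ∈ Y, (Ky y).Nonempty)
    (harch : ArchimedeanQM n p H)
    (φ : Measure (Fin p → ℝ)) [IsProbabilityMeasure φ] (hφY : φ Yᶜ = 0)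
    (γ : (Fin p → ℕ) → ℝ)
    (hγ : ∀ β, γ β = ∫ y in Y, ∏ l, y l ^ β l ∂φ)
    (J : (Fin p → ℝ) → ℝ)
    (hJ : ∀ y, J y = sInf ((fun x => evalXY n p f (x, y)) '' Ky y))
    (Xstar : (Fin p → ℝ) → Set (Fin n → ℝ))
    (hXs : ∀ y, Xstar y = {x ∈ Ky y | evalXY n p f (x, y) = J y})
    (xstar : (Fin p → ℝ) → (Fin n → ℝ))
    (hxu : ∀ᵐ y ∂φ, Xstar y = {xstar y})
    (zi : ℕ → (Fin n → ℕ) → (Fin p → ℕ) → ℝ)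
    (hzi : ∀ i, iZero n p H f ≤ i →
      RelaxFeasible n p H γ i (zi i) ∧
      Lz n p (zi i) f ≤ rhoSDP n p H γ f i + 1 / (i : ℝ))
    (hpol : MvPolynomial (Fin n) ℝ) :
    Tendsto (fun i => Lz n p (zi i) (rename Sum.inl hpol)) atTop
      (𝓝 (∫ y in Y, eval (xstar y) hpol ∂φ)) := by
  classical
  have hrestr : φ.restrict Y = φ := Measure.restrict_eq_self_of_ae_mem hφY
  rw [hrestr]
  rw [hrestr] at hγ
  have hYae : ∀ᵐ y ∂φ, y ∈ Y := hφY
  -- a.e. uniqueness of the minimizer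
  have hP : ∀ᵐ y ∂φ, (xstar y, y) ∈ K ∧ ∀ x, (x, y) ∈ K →
      evalXY n p f (x, y) ≤ evalXY n p f (xstar y, y) → x = xstar y := by
    filter_upwards [hYae, hxu] with y hyY hy
    have hmem : xstar y ∈ Xstar y := by rw [hy]; rfl
    rw [hXs, hKy] at hmem
    have hKiff : ∀ x, x ∈ Ky y ↔ (x, y) ∈ K := by
      intro x
      rw [hKy, hKdef]
      exact ⟨fun h => ⟨hyY, h⟩, fun h => h.2⟩
    refine ⟨?_, fun x hxK hle => ?_⟩
    · rw [← hKiff, hKy]; exact hmem.1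
    · have hxs : x ∈ Xstar y := by
        rw [hXs]
        refine ⟨(hKiff x).2 hxK, le_antisymm (hle.trans hmem.2.le) ?_⟩
        rw [hJ]
        refine csInf_le ?_ ⟨x, (hKiff x).2 hxK, rfl⟩
        obtain ⟨b, hb⟩ := (hKc.image (evalXY_continuous f)).bddBelow
        refine ⟨b, ?_⟩
        rintro _ ⟨x', hx', rfl⟩
        exact hb ⟨(x', y), (hKiff x').1 hx', rfl⟩
      rw [hy] at hxs
      exact hxs
  have hxm : AEMeasurable xstar φ := argmin_aemeasurable hKc (evalXY_continuous f) hP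
  have hum : AEMeasurable (fun y => (xstar y, y)) φ := hxm.prodMk aemeasurable_id
  have huK : ∀ᵐ y ∂φ, (xstar y, y) ∈ K := hP.mono fun y h => h.1
  have hHK : ∀ w ∈ K, ∀ j, 0 ≤ evalXY n p (H j) w := by
    intro w hw j
    rw [hKdef] at hw
    rw [hH]
    rcases j with j | j
    · exact hw.2 j
    · have h1 := hw.1
      rw [hYdef] at h1
      have := h1 j
      simp only [evalXY, Sum.elim_inr, eval_rename]
      exact this
  -- the feasible sequence from the optimal measure
  set zs := momSeq φ (fun y => (xstar y, y)) with hzs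
  have hzsL : ∀ q, Lz n p zs q = ∫ y, evalXY n p q (xstar y, y) ∂φ :=
    fun q => Lz_momSeq hKc hum huK q
  have hzf : ∀ i, RelaxFeasible n p H γ i zs := by
    intro i
    refine ⟨fun q _ => ?_, fun j q _ => ?_, fun β _ => ?_⟩
    · rw [hzsL]
      refine integral_nonneg fun y => ?_
      simp only [evalXY, map_pow]
      positivity
    · rw [hzsL]
      refine integral_nonneg_of_ae ?_
      filter_upwards [huK] with y hy
      have := hHK _ hy j
      simp only [evalXY, map_pow, map_mul, Pi.zero_apply] at this ⊢
      positivity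
    · rw [hγ, hzs, momSeq]
      simp
  -- the quadratic module
  obtain ⟨N, σ0, σ, hσ0, hσ, hN⟩ := harch
  have hNQ : C N - (∑ i : Fin n ⊕ Fin p, X i ^ 2) ∈ QM H := by
    rw [hN]
    exact add_mem (QM_sumSq hσ0) (sum_mem fun j _ => QM_sumSq_mul (hσ j) j)
  have hM := QM_isQMod hNQ
  have hγ0 : γ (fun _ => 0) = 1 := by rw [hγ]; simp
  have hone : ∀ i z, RelaxFeasible n p H γ i z → z (fun _ => 0) (fun _ => 0) = 1 := by
    intro i z hz
    rw [hz.2.2 (fun _ => 0) (by simp), hγ0]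
  have hbd : ∀ q, ∃ B : ℝ, ∃ i1 : ℕ, ∀ i ≥ i1, ∀ z, RelaxFeasible n p H γ i z →
      Lz n p z q ∈ Icc (-B) B := by
    intro q
    obtain ⟨B, h1, h2⟩ := hM.two_sided q
    obtain ⟨i1, hi1⟩ := QM_Lz_nonneg H γ h1
    obtain ⟨i2, hi2⟩ := QM_Lz_nonneg H γ h2
    refine ⟨B, max i1 i2, fun i hi z hz => ?_⟩
    have a1 := hi1 i (le_of_max_le_left hi) z hz
    have a2 := hi2 i (le_of_max_le_right hi) z hz
    rw [sub_eq_add_neg, Lz_add, Lz_neg, MvPolynomial.algebraMap_eq, Lz_C, hone i z hz] at a1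
    rw [Lz_add, MvPolynomial.algebraMap_eq, Lz_C, hone i z hz] at a2
    constructor <;> linarith
  have hfeas : ∀ᶠ i in atTop, RelaxFeasible n p H γ i (zi i) :=
    (eventually_ge_atTop (iZero n p H f)).mono fun i hi => (hzi i hi).1
  have hupper : ∀ᶠ i : ℕ in atTop, Lz n p (zi i) f ≤ Lz n p zs f + 1 / (i : ℝ) := by
    obtain ⟨B, i1, hB⟩ := hbd f
    filter_upwards [eventually_ge_atTop (iZero n p H f), eventually_ge_atTop i1] with i hi hi1
    refine (hzi i hi).2.trans ?_
    gcongr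
    refine csInf_le ⟨-B, ?_⟩ ⟨zs, hzf i, rfl⟩
    rintro _ ⟨z, hz, rfl⟩
    exact (hB i hi1 z hz).1
  rw [tendsto_iff_ultrafilter]
  intro U hU
  have hlim : ∀ q, ∃ l : ℝ, Tendsto (fun i => Lz n p (zi i) q) U (𝓝 l) := by
    intro q
    obtain ⟨B, i1, hB⟩ := hbd q
    have hev : ∀ᶠ i in (U : Filter ℕ), Lz n p (zi i) q ∈ Icc (-B) B := by
      filter_upwards [hU hfeas, hU (eventually_ge_atTop i1)] with i h1 h2
      exact hB i h2 _ h1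
    obtain ⟨l, -, hl⟩ := (isCompact_Icc (a := -B) (b := B)).ultrafilter_le_nhds
      (U.map fun i => Lz n p (zi i) q) (by rw [le_principal_iff]; exact hev)
    exact ⟨l, hl⟩
  choose L hL using hlim
  have hst : IsState (QM H) L := by
    refine ⟨fun a b => ?_, fun c a => ?_, ?_, fun x hx => ?_⟩
    · refine tendsto_nhds_unique (hL (a + b)) ?_
      simp only [Lz_add]
      exact (hL a).add (hL b)
    · refine tendsto_nhds_unique (hL _) ?_
      simp only [MvPolynomial.algebraMap_eq, Lz_smul]
      exact (hL a).const_mul c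
    · refine tendsto_nhds_unique (hL 1) (Tendsto.congr' ?_ tendsto_const_nhds)
      filter_upwards [hU hfeas] with i hi
      rw [← C_1, Lz_C, hone i _ hi, mul_one]
    · obtain ⟨i1, hi1⟩ := QM_Lz_nonneg H γ hx
      refine ge_of_tendsto (hL x) ?_
      filter_upwards [hU hfeas, hU (eventually_ge_atTop i1)] with i h1 h2
      exact hi1 i h2 _ h1
  have : CompactSpace K := isCompact_iff_compactSpace.1 hKc
  obtain ⟨μ0, hμ0⟩ := state_repr hNQ (T := K) (fun w => Sum.elim w.1.1 w.1.2)
    (by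
      refine continuous_pi fun i => ?_
      rcases i with i | i <;> simp only [Sum.elim_inl, Sum.elim_inr] <;> fun_prop)
    (by
      intro v hv
      refine ⟨⟨(v ∘ Sum.inl, v ∘ Sum.inr), ?_⟩, Sum.elim_comp_inl_inr v⟩
      rw [hKdef]
      refine ⟨?_, fun j => ?_⟩
      · rw [hYdef]
        intro k
        have := hv (Sum.inr k)
        rw [hH] at this
        simpa only [Sum.elim_inr, eval_rename] using this
      · have := hv (Sum.inl j)
        rw [hH] at this
        simpa only [evalXY, Sum.elim_comp_inl_inr, Sum.elim_inl] using this) hst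
  let μ : Measure ((Fin n → ℝ) × (Fin p → ℝ)) := (μ0 : Measure K).map Subtype.val
  have hme : MeasurableEmbedding (Subtype.val : K → (Fin n → ℝ) × (Fin p → ℝ)) :=
    MeasurableEmbedding.subtype_coe hKc.measurableSet
  have hμp : IsProbabilityMeasure μ :=
    Measure.isProbabilityMeasure_map measurable_subtype_coe.aemeasurable
  have hμK : ∀ᵐ w ∂μ, w ∈ K := by
    rw [hme.ae_map_iff]
    exact Eventually.of_forall fun w => w.2
  have hμL : ∀ q, L q = ∫ w, evalXY n p q w ∂μ := by
    intro q
    rw [hμ0, hme.integral_map]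
    rfl
  clear_value μ
  -- marginal
  have hLy : ∀ q : MvPolynomial (Fin p) ℝ, L (rename Sum.inr q) = ∫ y, eval y q ∂φ := by
    intro q
    have e : Lz n p zs (rename Sum.inr q) = ∫ y, eval y q ∂φ := by
      rw [hzsL]
      refine integral_congr_ae (Eventually.of_forall fun y => ?_)
      simp only [evalXY, eval_rename, Sum.elim_comp_inr]
    rw [← e]
    refine tendsto_nhds_unique (hL _) (Tendsto.congr' ?_ tendsto_const_nhds)
    filter_upwards [hU hfeas, hU (eventually_ge_atTop (rename Sum.inr q :
      MvPolynomial (Fin n ⊕ Fin p) ℝ).totalDegree)] with i hi hdeg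
    unfold Lz
    refine Finset.sum_congr rfl fun d hd => ?_
    congr 1
    have hd0 : (fun k => d (Sum.inl k)) = fun _ : Fin n => 0 := by
      funext k
      rw [mem_support_iff] at hd
      obtain ⟨u, hu, -⟩ := coeff_rename_ne_zero _ _ _ hd
      rw [← hu, Finsupp.mapDomain_of_notMem_range]
      simp
    have hdi := (degOK_of_le _ hdeg d hd).2
    rw [hd0, hi.2.2 _ (by omega), (hzf i).2.2 _ (by omega)]
  have hmarg : μ.map Prod.snd = φ := by
    have : IsProbabilityMeasure (μ.map Prod.snd) :=
      Measure.isProbabilityMeasure_map measurable_snd.aemeasurable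
    refine measure_ext_of_poly hYc _ _ ?_ hφY fun q => ?_
    · rw [Measure.map_apply measurable_snd hYc.measurableSet.compl]
      refine measure_mono_null ?_ hμK
      intro w hw hwK
      have hwK : w ∈ K := hwK
      rw [hKdef] at hwK
      exact hw hwK.1
    · rw [← hLy, hμL, integral_map measurable_snd.aemeasurable
        (MvPolynomial.continuous_eval q).aestronglyMeasurable]
      refine integral_congr_ae (Eventually.of_forall fun w => ?_)
      simp only [evalXY, eval_rename, Sum.elim_comp_inr]
  have hPμ : ∀ᵐ w ∂μ, (xstar w.2, w.2) ∈ K ∧ ∀ x, (x, w.2) ∈ K →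
      evalXY n p f (x, w.2) ≤ evalXY n p f (xstar w.2, w.2) → x = xstar w.2 := by
    rw [← hmarg] at hP
    exact ae_of_ae_map measurable_snd.aemeasurable hP
  have htrans : ∀ q, ∫ y, evalXY n p q (xstar y, y) ∂φ =
      ∫ w, evalXY n p q (xstar w.2, w.2) ∂μ := by
    intro q
    have h1 := (evalXY_integrable hKc hum huK q).aestronglyMeasurable
    rw [← hmarg] at h1
    conv_lhs => rw [← hmarg]
    exact integral_map measurable_snd.aemeasurable h1
  have hLf : L f ≤ ∫ w, evalXY n p f (xstar w.2, w.2) ∂μ := by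
    rw [← htrans, ← hzsL]
    have h1 : Tendsto (fun i : ℕ => Lz n p zs f + 1 / (i : ℝ)) U (𝓝 (Lz n p zs f + 0)) :=
      (tendsto_const_nhds.add tendsto_one_div_atTop_nhds_zero_nat).mono_left hU
    rw [add_zero] at h1
    exact le_of_tendsto_of_tendsto (hL f) h1 (hU hupper)
  have hi1 : Integrable (fun w => evalXY n p f w) μ :=
    evalXY_integrable hKc aemeasurable_id hμK f
  have hi2 : Integrable (fun w => evalXY n p f (xstar w.2, w.2)) μ := by
    have hk : ∀ᵐ w ∂μ, (fun w : (Fin n → ℝ) × (Fin p → ℝ) => (xstar w.2, w.2)) w ∈ K :=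
      hPμ.mono fun w h => h.1
    suffices hum2 : AEMeasurable (fun w : (Fin n → ℝ) × (Fin p → ℝ) => (xstar w.2, w.2)) μ from
      evalXY_integrable hKc hum2 hk f
    rw [← hmarg] at hum
    exact AEMeasurable.comp_measurable (f := fun w : (Fin n → ℝ) × (Fin p → ℝ) => w.2) hum
      measurable_snd
  have hnn : 0 ≤ᵐ[μ] fun w => evalXY n p f w - evalXY n p f (xstar w.2, w.2) := by
    filter_upwards [hμK, hPμ] with w hwK hw
    simp only [Pi.zero_apply, sub_nonneg]
    by_contra! hlt
    have h2 := hw.2 w.1 hwK hlt.le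
    have h3 : w = (xstar w.2, w.2) := Prod.ext h2 rfl
    rw [← h3] at hlt
    exact lt_irrefl _ hlt
  have hzero : ∫ w, (evalXY n p f w - evalXY n p f (xstar w.2, w.2)) ∂μ = 0 := by
    refine le_antisymm ?_ (integral_nonneg_of_ae hnn)
    rw [integral_sub hi1 hi2, ← hμL]
    linarith
  rw [integral_eq_zero_iff_of_nonneg_ae hnn (hi1.sub hi2)] at hzero
  have hfin : L (rename Sum.inl hpol) = ∫ y, eval (xstar y) hpol ∂φ := by
    have e : ∫ y, eval (xstar y) hpol ∂φ =
        ∫ y, evalXY n p (rename Sum.inl hpol) (xstar y, y) ∂φ := by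
      refine integral_congr_ae (Eventually.of_forall fun y => ?_)
      simp only [evalXY, eval_rename, Sum.elim_comp_inl]
    rw [e, htrans, hμL]
    refine integral_congr_ae ?_
    filter_upwards [hμK, hPμ, hzero] with w hwK hw h0
    simp only [Pi.zero_apply, sub_eq_zero] at h0
    have h2 := hw.2 w.1 hwK h0.le
    have h3 : w = (xstar w.2, w.2) := Prod.ext h2 rfl
    rw [← h3]
  rw [← hfin]
  exact hL _
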